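/- arXiv:1908.04667 — 2 statements merged into one kernel-verified Lean document; each statement's English description precedes it below -/
import Mathlib

section
/- Let 0 < λ₁ < λ₂ ≤ 2λ₁, let u₁, u₂ ≥ 0 and c, w₁, w₂ ∈ ℝ, define l(x) = u₂e^{−2λ₂x} + c·e^{−(λ₁+λ₂)x} + w₂e^{−λ₂x} + u₁e^{−2λ₁x} + w₁e^{−λ₁x}, and define m(x) := x⁻² ∫₀ˣ y·l(y) dy for x > 0. Then for q ∈ {l, m} there do not exist points 0 < x₁ < x₂ < x₃ < x₄ < x₅ with q(x₁) < 0, q(x₂) > 0, q(x₃) < 0, q(x₄) > 0, and q(x₅) < 0. -/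
open MeasureTheory intervalIntegral

/-!
The argument is Descartes' rule of signs for exponential sums. If `f` takes alternating signs at
`n + 1` points, then by the mean value theorem applied to `exp (-ν x) * f x`, the function
`ν * f - f'` takes alternating signs, with the same initial sign, at `n` points. When `f` is a sum
of exponentials `a i * exp (μ i * x)` and `ν = μ j`, this operation removes the `j`-th term and
multiplies the other coefficients by `μ j - μ i`. Removing all terms but the one of smallest
exponent leaves a single exponential whose coefficient still has its original sign, so that sign is
the initial sign of the alternation.

For `m`, the function `x ^ 2 * m x` vanishes at `0` and has derivative `x * l x`, so every
alternation of `m` on the positive half-line yields one of `l` of the same length.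
-/

/-- `f` takes strictly alternating signs at `n` increasing points of `S`, beginning with a negative
value. Indices start at `0`, so the value at the point of index `i` has sign `(-1) ^ (i + 1)`. -/
def AlternatesOn (f : ℝ → ℝ) (S : Set ℝ) (n : ℕ) : Prop :=
  ∃ x : Fin n → ℝ, StrictMono x ∧ ∀ i, x i ∈ S ∧ (-1) ^ (i : ℕ) * f (x i) < 0

/-- The real exponential sum with coefficients `a i` and (signed, possibly repeated) exponents
`μ i`. -/
noncomputable def expSum {ι : Type*} (s : Finset ι) (a μ : ι → ℝ) (x : ℝ) : ℝ :=
  ∑ i ∈ s, a i * Real.exp (μ i * x)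

theorem alternatesOn_Ioi_of_five_signs {f : ℝ → ℝ} {a x₁ x₂ x₃ x₄ x₅ : ℝ} (h₀₁ : a < x₁)
    (h₁₂ : x₁ < x₂) (h₂₃ : x₂ < x₃) (h₃₄ : x₃ < x₄) (h₄₅ : x₄ < x₅)
    (h₁ : f x₁ < 0) (h₂ : 0 < f x₂) (h₃ : f x₃ < 0) (h₄ : 0 < f x₄) (h₅ : f x₅ < 0) :
    AlternatesOn f (Set.Ioi a) 5 := by
  have hmono : StrictMono ![x₁, x₂, x₃, x₄, x₅] := by
    simp [Fin.strictMono_iff_lt_succ, Fin.forall_fin_succ, h₁₂, h₂₃, h₃₄, h₄₅]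
  refine ⟨_, hmono, fun i => ⟨h₀₁.trans_le (hmono.monotone (Fin.zero_le i)), ?_⟩⟩
  fin_cases i <;> norm_num [h₁, h₂, h₃, h₄, h₅]

theorem alternatesOn_deriv_of_increments {F F' : ℝ → ℝ} {S : Set ℝ} {n : ℕ}
    (hS : S.OrdConnected) (hFc : ContinuousOn F S)
    (hF : ∀ t ∈ interior S, HasDerivAt F (F' t) t)
    {x : Fin (n + 1) → ℝ} (hx : StrictMono x) (hxS : ∀ i, x i ∈ S)
    (hinc : ∀ i : Fin n, (-1) ^ (i : ℕ) * (F (x i.succ) - F (x i.castSucc)) < 0) :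
    AlternatesOn F' (interior S) n := by
  have hsub (i : Fin n) : Set.Icc (x i.castSucc) (x i.succ) ⊆ S := hS.out (hxS _) (hxS _)
  have hsub' (i : Fin n) : Set.Ioo (x i.castSucc) (x i.succ) ⊆ interior S :=
    interior_maximal (Set.Ioo_subset_Icc_self.trans (hsub i)) isOpen_Ioo
  choose y hy hslope using fun i : Fin n =>
    exists_hasDerivAt_eq_slope F F' (hx i.castSucc_lt_succ) (hFc.mono (hsub i))
      fun t ht => hF t (hsub' i ht)
  refine ⟨y, fun i j hij => ?_, fun i => ⟨hsub' i (hy i), ?_⟩⟩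
  · calc y i < x i.succ := (hy i).2
      _ ≤ x j.castSucc := hx.monotone (Fin.succ_le_castSucc_iff.2 hij)
      _ < y j := (hy j).1
  · rw [hslope, ← mul_div_assoc]
    exact div_neg_of_neg_of_pos (hinc i) (sub_pos.2 (hx i.castSucc_lt_succ))

namespace AlternatesOn

variable {f f' g p : ℝ → ℝ} {S T : Set ℝ} {n : ℕ}

theorem mono (h : AlternatesOn f S n) (hST : S ⊆ T) : AlternatesOn f T n := by
  obtain ⟨x, hx, hsign⟩ := h
  exact ⟨x, hx, fun i => ⟨hST (hsign i).1, (hsign i).2⟩⟩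

theorem of_eq_pos_mul (h : AlternatesOn g S n) (hp : ∀ x ∈ S, 0 < p x)
    (hg : ∀ x ∈ S, g x = p x * f x) : AlternatesOn f S n := by
  obtain ⟨x, hx, hsign⟩ := h
  refine ⟨x, hx, fun i => ⟨(hsign i).1, ?_⟩⟩
  have hneg : p (x i) * ((-1) ^ (i : ℕ) * f (x i)) < 0 := by
    rw [mul_left_comm, ← hg _ (hsign i).1]
    exact (hsign i).2
  exact neg_of_mul_neg_right hneg (hp _ (hsign i).1).le

theorem neg_deriv (h : AlternatesOn f S (n + 1)) (hS : S.OrdConnected) (hfc : ContinuousOn f S)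
    (hf : ∀ x ∈ interior S, HasDerivAt f (f' x) x) :
    AlternatesOn (fun x => -f' x) (interior S) n := by
  obtain ⟨x, hx, hsign⟩ := h
  refine alternatesOn_deriv_of_increments (F := fun x => -f x) hS hfc.neg
    (fun t ht => (hf t ht).neg) hx (fun i => (hsign i).1) fun i => ?_
  have hleft := (hsign i.castSucc).2
  have hright := (hsign i.succ).2
  simp only [Fin.val_castSucc, Fin.val_succ, pow_succ] at hleft hright
  linarith

theorem mul_sub_deriv (h : AlternatesOn f S (n + 1)) (hS : S.OrdConnected)
    (hfc : ContinuousOn f S) (hf : ∀ x ∈ interior S, HasDerivAt f (f' x) x) (ν : ℝ) :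
    AlternatesOn (fun x => ν * f x - f' x) (interior S) n := by
  have hdamped : AlternatesOn (fun x => Real.exp (-ν * x) * f x) S (n + 1) :=
    h.of_eq_pos_mul (p := fun x => Real.exp (ν * x)) (fun _ _ => Real.exp_pos _) fun x _ => by
      rw [← mul_assoc, ← Real.exp_add, neg_mul, add_neg_cancel, Real.exp_zero, one_mul]
  have hexp (x : ℝ) : HasDerivAt (fun x => Real.exp (-ν * x)) (Real.exp (-ν * x) * -ν) x := by
    simpa using ((hasDerivAt_id x).const_mul (-ν)).exp
  refine (hdamped.neg_deriv hS (ContinuousOn.mul (by fun_prop) hfc)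
    fun x hx => (hexp x).mul (hf x hx)).of_eq_pos_mul
    (p := fun x => Real.exp (-ν * x)) (fun _ _ => Real.exp_pos _) fun x _ => ?_
  ring

theorem of_integral (hf : Continuous f) {a : ℝ}
    (h : AlternatesOn (fun x => ∫ t in a..x, f t) (Set.Ioi a) n) :
    AlternatesOn f (Set.Ioi a) n := by
  obtain ⟨x, hx, hsign⟩ := h
  have hderiv (t : ℝ) : HasDerivAt (fun x => ∫ t in a..x, f t) (f t) t :=
    (hf.integral_hasStrictDerivAt a t).hasDerivAt
  rw [← interior_Ici]
  -- The primitive vanishes at `a`, so prepending `a` to the points gives one more increment.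
  refine alternatesOn_deriv_of_increments (x := Fin.cons a x) Set.ordConnected_Ici
    (fun t _ => (hderiv t).continuousAt.continuousWithinAt) (fun t _ => hderiv t)
    (Fin.strictMono_cons.2 ⟨fun i => (hsign i).1, hx⟩)
    (Fin.cases Set.self_mem_Ici fun i => Set.Ioi_subset_Ici_self (hsign i).1) fun i => ?_
  have hright := (hsign i).2
  obtain _ | n := n
  · exact i.elim0
  cases i using Fin.cases with
  | zero => simpa using hright
  | succ j =>
    have hleft := (hsign j.castSucc).2
    simp only [Fin.castSucc_succ, Fin.cons_succ, Fin.val_castSucc, Fin.val_succ, pow_succ]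
      at hleft hright ⊢
    linarith

end AlternatesOn

section ExpSum

variable {ι : Type*} {s : Finset ι} {a μ : ι → ℝ}

theorem hasDerivAt_expSum (s : Finset ι) (a μ : ι → ℝ) (x : ℝ) :
    HasDerivAt (expSum s a μ) (expSum s (fun i => μ i * a i) μ x) x := by
  refine HasDerivAt.fun_sum fun i _ => ?_
  have hexp : HasDerivAt (fun x => Real.exp (μ i * x)) (Real.exp (μ i * x) * μ i) x := by
    simpa using ((hasDerivAt_id x).const_mul (μ i)).exp
  exact (hexp.const_mul (a i)).congr_deriv (by ring)

theorem continuous_expSum (s : Finset ι) (a μ : ι → ℝ) : Continuous (expSum s a μ) :=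
  continuous_iff_continuousAt.2 fun x => (hasDerivAt_expSum s a μ x).continuousAt

theorem mul_expSum_sub_deriv (s : Finset ι) (a μ : ι → ℝ) (ν x : ℝ) :
    ν * expSum s a μ x - expSum s (fun i => μ i * a i) μ x =
      expSum s (fun i => (ν - μ i) * a i) μ x := by
  simp only [expSum, Finset.mul_sum, ← Finset.sum_sub_distrib]
  exact Finset.sum_congr rfl fun i _ => by ring

theorem AlternatesOn.expSum_erase [DecidableEq ι] {n : ℕ}
    (h : AlternatesOn (expSum s a μ) Set.univ (n + 1)) (j : ι) :
    AlternatesOn (expSum (s.erase j) (fun i => (μ j - μ i) * a i) μ) Set.univ n := by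
  have hstep := h.mul_sub_deriv Set.ordConnected_univ (continuous_expSum s a μ).continuousOn
    (fun x _ => hasDerivAt_expSum s a μ x) (μ j)
  rw [interior_univ] at hstep
  convert hstep using 2 with x
  rw [mul_expSum_sub_deriv]
  exact Finset.sum_erase s (by simp)

theorem not_alternatesOn_expSum {i₀ : ι} (hi₀ : i₀ ∈ s) (hmin : ∀ i ∈ s, μ i₀ ≤ μ i)
    (ha : 0 ≤ a i₀) : ¬ AlternatesOn (expSum s a μ) Set.univ s.card := by
  classical
  induction s using Finset.strongInduction generalizing a with
  | H s ih =>
    intro h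
    obtain rfl | hs := Finset.eq_singleton_or_nontrivial hi₀
    · rw [Finset.card_singleton] at h
      obtain ⟨x, -, hsign⟩ := h
      have hneg : a i₀ * Real.exp (μ i₀ * x 0) < 0 := by simpa [expSum] using (hsign 0).2
      exact hneg.not_ge (mul_nonneg ha (Real.exp_pos _).le)
    · obtain ⟨j, hj, hne⟩ := hs.exists_ne i₀
      rw [← Finset.card_erase_add_one hj] at h
      exact ih (s.erase j) (Finset.erase_ssubset hj) (Finset.mem_erase.2 ⟨hne.symm, hi₀⟩)
        (fun i hi => hmin i (Finset.mem_of_mem_erase hi))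
        (mul_nonneg (sub_nonneg.2 (hmin j hj)) ha) (h.expSum_erase j)

end ExpSum

theorem no_five_alternations_prox_general
    (lam1 lam2 : ℝ) (h0 : 0 ≤ lam2) (h12 : lam1 ≤ lam2)
    (u1 u2 : ℝ) (hu2 : 0 ≤ u2) (c w1 w2 : ℝ)
    (l m : ℝ → ℝ)
    (hl : ∀ x : ℝ, l x = u2 * Real.exp (-(2 * lam2 * x)) +
        c * Real.exp (-((lam1 + lam2) * x)) + w2 * Real.exp (-(lam2 * x)) +
        u1 * Real.exp (-(2 * lam1 * x)) + w1 * Real.exp (-(lam1 * x)))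
    (hm : ∀ x : ℝ, 0 < x → m x = (x ^ 2)⁻¹ * ∫ t in (0 : ℝ)..x, t * l t) :
    ∀ q : ℝ → ℝ, (q = l ∨ q = m) →
      ¬ ∃ x1 x2 x3 x4 x5 : ℝ, 0 < x1 ∧ x1 < x2 ∧ x2 < x3 ∧ x3 < x4 ∧ x4 < x5 ∧
        q x1 < 0 ∧ 0 < q x2 ∧ q x3 < 0 ∧ 0 < q x4 ∧ q x5 < 0 := by
  have hl_sum : l = expSum Finset.univ ![u2, c, w2, u1, w1]
      ![-(2 * lam2), -(lam1 + lam2), -lam2, -(2 * lam1), -lam1] := by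
    ext x
    simp only [expSum, Fin.sum_univ_five, hl, ← neg_mul]
    rfl
  have hl_not : ¬ AlternatesOn l (Set.Ioi 0) 5 := fun h => by
    refine not_alternatesOn_expSum (Finset.mem_univ 0) (fun i _ => ?_) hu2
      (hl_sum ▸ h.mono (Set.subset_univ _))
    fin_cases i <;> simp <;> linarith
  have hl_cont : Continuous l := hl_sum ▸ continuous_expSum _ _ _
  have hm_to_l (h : AlternatesOn m (Set.Ioi 0) 5) : AlternatesOn l (Set.Ioi 0) 5 :=
    (AlternatesOn.of_integral (continuous_id.mul hl_cont) <|
      h.of_eq_pos_mul (fun x hx => inv_pos.2 (pow_pos hx 2)) hm).of_eq_pos_mul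
      (fun _ hx => hx) fun _ _ => rfl
  rintro q hq ⟨x1, x2, x3, x4, x5, hx1, hx12, hx23, hx34, hx45, s1, s2, s3, s4, s5⟩
  have hq_alt : AlternatesOn q (Set.Ioi 0) 5 :=
    alternatesOn_Ioi_of_five_signs hx1 hx12 hx23 hx34 hx45 s1 s2 s3 s4 s5
  rcases hq with rfl | rfl
  exacts [hl_not hq_alt, hl_not (hm_to_l hq_alt)]

/-- Scale-proximal (or critical) case, any correlation: the sign pattern
`(−, +, −, +, −)` is impossible for the derivatives of forward and yield curve. -/
theorem no_five_alternations_prox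
    (lam1 lam2 : ℝ) (h1 : 0 < lam1) (h2 : lam1 < lam2) (h3 : lam2 ≤ 2 * lam1)
    (u1 u2 : ℝ) (hu1 : 0 ≤ u1) (hu2 : 0 ≤ u2) (c w1 w2 : ℝ)
    (l m : ℝ → ℝ)
    (hl : ∀ x : ℝ, l x = u2 * Real.exp (-(2 * lam2 * x)) +
        c * Real.exp (-((lam1 + lam2) * x)) + w2 * Real.exp (-(lam2 * x)) +
        u1 * Real.exp (-(2 * lam1 * x)) + w1 * Real.exp (-(lam1 * x)))
    (hm : ∀ x : ℝ, 0 < x → m x = (x ^ 2)⁻¹ * ∫ t in (0 : ℝ)..x, t * l t) :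
    ∀ q : ℝ → ℝ, (q = l ∨ q = m) →
      ¬ ∃ x1 x2 x3 x4 x5 : ℝ, 0 < x1 ∧ x1 < x2 ∧ x2 < x3 ∧ x3 < x4 ∧ x4 < x5 ∧
        q x1 < 0 ∧ 0 < q x2 ∧ q x3 < 0 ∧ 0 < q x4 ∧ q x5 < 0 :=
  no_five_alternations_prox_general lam1 lam2 (h1.trans h2).le h2.le u1 u2 hu2 c w1 w2 l m hl hm
end

section
/- Let 0 < λ₁, 2λ₁ < λ₂, and 0 < r₁ < r₂ < r₃. Then there exist u₂ > 0, u₁ > 0 and w₁ < 0, w₂ < 0 such that the function l(x) := u₂·e^{−2λ₂x} + w₂·e^{−λ₂x} + u₁·e^{−2λ₁x} + w₁·e^{−λ₁x} satisfies: l(x) > 0 for 0 ≤ x < r₁, l(x) < 0 for r₁ < x < r₂, l(x) > 0 for r₂ < x < r₃, l(x) < 0 for x > r₃, and l(r₁) = l(r₂) = l(r₃) = 0. -/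
/-!
For strictly increasing exponents `μ`, Rolle's theorem bounds the number of zeros of
`∑ j, a j * exp (μ j * x)`, so the generalized Vandermonde determinant `det (exp (μ j * x i))`
vanishes only when two nodes `x i` coincide. The strictly increasing exponents form a convex set, so
for fixed distinct nodes the sign of this determinant does not depend on `μ`; for `μ j = j` it is an
ordinary Vandermonde determinant in `exp (x i)`. Laplace expansion along the row of a variable node
`x`, the other nodes being the prescribed `t i`, gives an exponential sum with the sign of
`∏ i, (t i - x)`, and its coefficients alternate in sign because the minors are positive.
-/

open Finset Function Matrix
open Real (exp)
open SignType (sign)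

theorem sign_prod {ι R : Type*} [CommRing R] [LinearOrder R] [IsStrictOrderedRing R]
    (s : Finset ι) (f : ι → R) : sign (∏ i ∈ s, f i) = ∏ i ∈ s, sign (f i) :=
  map_prod signHom f s

theorem det_vandermonde_pos {R : Type*} [CommRing R] [LinearOrder R] [IsStrictOrderedRing R]
    {n : ℕ} {x : Fin n → R} (hx : StrictMono x) : 0 < (vandermonde x).det := by
  rw [det_vandermonde]
  exact prod_pos fun i _ => prod_pos fun j hj => sub_pos.2 (hx (mem_Ioi.1 hj))

theorem det_vandermonde_vecCons {R : Type*} [CommRing R] {n : ℕ} (x : R) (t : Fin n → R) :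
    (vandermonde (vecCons x t)).det = (∏ i, (t i - x)) * (vandermonde t).det := by
  simp [det_vandermonde, Fin.prod_univ_succ, Fin.prod_Ioi_succ]

theorem sign_sub_of_strictMono {α β : Type*} [AddCommGroup α] [LinearOrder α]
    [IsOrderedAddMonoid α] [AddCommGroup β] [LinearOrder β] [IsOrderedAddMonoid β] {f : α → β}
    (hf : StrictMono f) (x y : α) : sign (f x - f y) = sign (x - y) := by
  rcases lt_trichotomy x y with h | rfl | h
  · rw [sign_neg (sub_neg.2 (hf h)), sign_neg (sub_neg.2 h)]
  · simp only [sub_self, sign_zero]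
  · rw [sign_pos (sub_pos.2 (hf h)), sign_pos (sub_pos.2 h)]

theorem convex_setOf_strictMono {𝕜 ι β : Type*} [Semiring 𝕜] [PartialOrder 𝕜] [Preorder ι]
    [AddCommMonoid β] [PartialOrder β] [IsOrderedCancelAddMonoid β] [Module 𝕜 β]
    [PosSMulStrictMono 𝕜 β] : Convex 𝕜 {f : ι → β | StrictMono f} := by
  rw [convex_iff_forall_pos]
  intro f hf g hg a b ha hb _ i j hij
  exact add_lt_add (smul_lt_smul_of_pos_left (hf hij) ha) (smul_lt_smul_of_pos_left (hg hij) hb)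

theorem exists_strictMono_hasDerivAt_eq_zero {n : ℕ} {f f' : ℝ → ℝ}
    (hf : ∀ x, HasDerivAt f (f' x) x) {x : Fin (n + 1) → ℝ} (hx : StrictMono x)
    (hfx : ∀ i : Fin n, f (x i.castSucc) = f (x i.succ)) :
    ∃ y : Fin n → ℝ, StrictMono y ∧ ∀ i, f' (y i) = 0 := by
  have hcont : Continuous f := continuous_iff_continuousAt.2 fun z => (hf z).continuousAt
  have rolle (i : Fin n) : ∃ y ∈ Set.Ioo (x i.castSucc) (x i.succ), f' y = 0 :=
    exists_hasDerivAt_eq_zero (hx i.castSucc_lt_succ) hcont.continuousOn (hfx i) fun z _ => hf z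
  choose y hy hy0 using rolle
  refine ⟨y, fun i j hij => ?_, hy0⟩
  calc y i < x i.succ := (hy i).2
    _ ≤ x j.castSucc := hx.monotone (Fin.succ_le_castSucc_iff.2 hij)
    _ < y j := (hy j).1

theorem eq_zero_of_sum_mul_exp_eq_zero_of_strictMono {n : ℕ} {μ a x : Fin n → ℝ}
    (hμ : Injective μ) (hx : StrictMono x) (h : ∀ i, ∑ j, a j * exp (μ j * x i) = 0) :
    a = 0 := by
  induction n with
  | zero => exact Subsingleton.elim _ _
  | succ n ih =>
    -- Dividing by the first exponential makes the first term constant, so Rolle eliminates it.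
    let f (z : ℝ) : ℝ := ∑ j, a j * exp ((μ j - μ 0) * z)
    have hf (z : ℝ) :
        HasDerivAt f (∑ j, a j * (μ j - μ 0) * exp ((μ j - μ 0) * z)) z := by
      refine HasDerivAt.fun_sum fun j _ => ?_
      exact ((hasDerivAt_const_mul (μ j - μ 0)).exp.const_mul (a j)).congr_deriv (by ring)
    have hfx (i : Fin (n + 1)) : f (x i) = 0 := by
      calc f (x i) = (∑ j, a j * exp (μ j * x i)) * exp (-(μ 0 * x i)) := by
            simp only [f, sum_mul, mul_assoc, ← Real.exp_add, ← sub_eq_add_neg, ← sub_mul]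
        _ = 0 := by rw [h, zero_mul]
    obtain ⟨y, hy, hy0⟩ :=
      exists_strictMono_hasDerivAt_eq_zero hf hx fun i => (hfx _).trans (hfx _).symm
    have htail_mul : (fun j : Fin n => a j.succ * (μ j.succ - μ 0)) = 0 :=
      ih (μ := fun j => μ j.succ - μ 0)
        (fun i j hij => Fin.succ_injective n (hμ (sub_left_injective hij))) hy fun i => by
          simpa [Fin.sum_univ_succ] using hy0 i
    have htail (j : Fin n) : a j.succ = 0 :=
      (mul_eq_zero.1 (congrFun htail_mul j)).resolve_right
        (sub_ne_zero.2 (hμ.ne j.succ_ne_zero))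
    have hhead : a 0 = 0 := by simpa [f, Fin.sum_univ_succ, htail] using hfx 0
    exact funext (Fin.cases hhead htail)

theorem eq_zero_of_sum_mul_exp_eq_zero {n : ℕ} {μ a x : Fin n → ℝ}
    (hμ : Injective μ) (hx : Injective x) (h : ∀ i, ∑ j, a j * exp (μ j * x i) = 0) :
    a = 0 :=
  eq_zero_of_sum_mul_exp_eq_zero_of_strictMono hμ
    ((Tuple.monotone_sort x).strictMono_of_injective (hx.comp (Tuple.sort x).injective))
    fun i => h (Tuple.sort x i)

/-- The generalized Vandermonde matrix `(exp (μ j * x i))`: rows are indexed by the nodes `x`,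
columns by the exponents `μ`. As a function of one node, its determinant is an exponential sum
vanishing at the other nodes. -/
noncomputable def expVandermonde {n : ℕ} (μ x : Fin n → ℝ) : Matrix (Fin n) (Fin n) ℝ :=
  .of fun i j => exp (μ j * x i)

namespace expVandermonde

variable {n : ℕ}

theorem natCast_eq_vandermonde (x : Fin n → ℝ) :
    expVandermonde (fun j => (j : ℝ)) x = vandermonde fun i => exp (x i) := by
  ext i j
  simp [expVandermonde, Real.exp_nat_mul]

theorem det_ne_zero {μ x : Fin n → ℝ} (hμ : Injective μ) (hx : Injective x) :
    (expVandermonde μ x).det ≠ 0 := by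
  intro hdet
  obtain ⟨a, ha, hmul⟩ := exists_mulVec_eq_zero_iff.2 hdet
  refine ha (eq_zero_of_sum_mul_exp_eq_zero hμ hx fun i => ?_)
  simpa [expVandermonde, mulVec, dotProduct, mul_comm] using congrFun hmul i

theorem continuous_det (x : Fin n → ℝ) : Continuous fun μ => (expVandermonde μ x).det := by
  refine Continuous.matrix_det (continuous_matrix fun i j => ?_)
  simp only [expVandermonde, of_apply]
  fun_prop

theorem sign_det_eq_of_strictMono {μ ν x : Fin n → ℝ} (hμ : StrictMono μ) (hν : StrictMono ν)
    (hx : Injective x) :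
    sign (expVandermonde μ x).det = sign (expVandermonde ν x).det := by
  refine (convex_setOf_strictMono (𝕜 := ℝ)).isPreconnected.constant
    (f := fun μ => sign (expVandermonde μ x).det) (fun ξ hξ => ?_) hμ hν
  have hsign := continuousAt_sign_of_ne_zero (det_ne_zero hξ.injective hx)
  exact (hsign.comp_of_eq (continuous_det x).continuousAt rfl).continuousWithinAt

theorem sign_det {μ : Fin n → ℝ} (hμ : StrictMono μ) (x : Fin n → ℝ) :
    sign (expVandermonde μ x).det = sign (vandermonde x).det := by
  by_cases hx : Injective x
  · rw [sign_det_eq_of_strictMono hμ (fun i j hij => Nat.cast_lt.2 hij) hx,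
      natCast_eq_vandermonde, det_vandermonde, det_vandermonde]
    simp only [sign_prod, sign_sub_of_strictMono Real.exp_strictMono]
  · obtain ⟨i, j, hij, hne⟩ := not_injective_iff.1 hx
    rw [det_zero_of_row_eq hne (by ext k; simp [expVandermonde, hij]),
      det_vandermonde_eq_zero_iff.2 ⟨i, j, hij, hne⟩]

theorem det_pos {μ x : Fin n → ℝ} (hμ : StrictMono μ) (hx : StrictMono x) :
    0 < (expVandermonde μ x).det := by
  rw [← sign_eq_one_iff, sign_det hμ, sign_eq_one_iff]
  exact det_vandermonde_pos hx

theorem det_vecCons (μ : Fin (n + 1) → ℝ) (t : Fin n → ℝ) (x : ℝ) :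
    (expVandermonde μ (vecCons x t)).det =
      ∑ j : Fin (n + 1),
        (-1) ^ (j : ℕ) * (expVandermonde (μ ∘ j.succAbove) t).det * exp (μ j * x) := by
  rw [det_succ_row_zero]
  refine sum_congr rfl fun j _ => ?_
  have hminor : (expVandermonde μ (vecCons x t)).submatrix Fin.succ j.succAbove =
      expVandermonde (μ ∘ j.succAbove) t := by
    ext i k
    simp [expVandermonde]
  rw [hminor]
  simp only [expVandermonde, of_apply, cons_val_zero]
  ring

theorem sign_det_vecCons {μ : Fin (n + 1) → ℝ} (hμ : StrictMono μ) {t : Fin n → ℝ}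
    (ht : StrictMono t) (x : ℝ) :
    sign (expVandermonde μ (vecCons x t)).det = sign (∏ i, (t i - x)) := by
  rw [sign_det hμ, det_vandermonde_vecCons, sign_mul, sign_pos (det_vandermonde_pos ht), mul_one]

end expVandermonde

theorem exists_alternating_sum_exp_sign_eq {n : ℕ} {μ : Fin (n + 1) → ℝ} (hμ : StrictMono μ)
    {t : Fin n → ℝ} (ht : StrictMono t) :
    ∃ a : Fin (n + 1) → ℝ, (∀ j, 0 < a j) ∧
      ∀ x, sign (∑ j : Fin (n + 1), (-1) ^ (j : ℕ) * a j * exp (μ j * x)) =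
        sign (∏ i, (t i - x)) :=
  ⟨fun j => (expVandermonde (μ ∘ j.succAbove) t).det,
    fun j => expVandermonde.det_pos (hμ.comp j.strictMono_succAbove) ht,
    fun x => by rw [← expVandermonde.det_vecCons, expVandermonde.sign_det_vecCons hμ ht]⟩

theorem HDH_strongly_attainable_general {k1 k2 k3 k4 r1 r2 r3 : ℝ}
    (hk12 : k2 < k1) (hk23 : k3 < k2) (hk34 : k4 < k3) (hr12 : r1 < r2) (hr23 : r2 < r3) :
    ∃ u2 u1 w1 w2 : ℝ, 0 < u2 ∧ 0 < u1 ∧ w1 < 0 ∧ w2 < 0 ∧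
      ∃ l : ℝ → ℝ,
        (∀ x : ℝ, l x = u2 * exp (-(k1 * x)) + w2 * exp (-(k2 * x)) +
          u1 * exp (-(k3 * x)) + w1 * exp (-(k4 * x))) ∧
        (∀ x : ℝ, x < r1 → 0 < l x) ∧
        (∀ x : ℝ, r1 < x → x < r2 → l x < 0) ∧
        (∀ x : ℝ, r2 < x → x < r3 → 0 < l x) ∧
        (∀ x : ℝ, r3 < x → l x < 0) ∧
        l r1 = 0 ∧ l r2 = 0 ∧ l r3 = 0 := by
  obtain ⟨a, ha, hsign⟩ := exists_alternating_sum_exp_sign_eq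
    (μ := ![-k1, -k2, -k3, -k4]) (t := ![r1, r2, r3]) (by simp [hk12, hk23, hk34])
    (by simp [hr12, hr23])
  let l (x : ℝ) : ℝ := a 0 * exp (-(k1 * x)) + -a 1 * exp (-(k2 * x)) +
    a 2 * exp (-(k3 * x)) + -a 3 * exp (-(k4 * x))
  have hl (x : ℝ) : sign (l x) = sign ((r1 - x) * (r2 - x) * (r3 - x)) := by
    simpa [l, Fin.sum_univ_four, pow_succ, Fin.prod_univ_three] using hsign x
  have hpos {x : ℝ} (hx : 0 < (r1 - x) * (r2 - x) * (r3 - x)) : 0 < l x := by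
    rwa [← sign_eq_one_iff, hl, sign_eq_one_iff]
  have hneg {x : ℝ} (hx : (r1 - x) * (r2 - x) * (r3 - x) < 0) : l x < 0 := by
    rwa [← sign_eq_neg_one_iff, hl, sign_eq_neg_one_iff]
  have hzero {x : ℝ} (hx : (r1 - x) * (r2 - x) * (r3 - x) = 0) : l x = 0 := by
    rwa [← sign_eq_zero_iff, hl, sign_eq_zero_iff]
  refine ⟨a 0, a 2, -a 3, -a 1, ha 0, ha 2, neg_neg_of_pos (ha 3), neg_neg_of_pos (ha 1), l,
    fun _ => rfl, fun x hx1 => hpos ?_, fun x hx1 hx2 => hneg ?_, fun x hx2 hx3 => hpos ?_,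
    fun x hx3 => hneg ?_, hzero (by ring), hzero (by ring), hzero (by ring)⟩
  · exact mul_pos (mul_pos (by linarith) (by linarith)) (by linarith)
  · exact mul_neg_of_neg_of_pos (mul_neg_of_neg_of_pos (by linarith) (by linarith)) (by linarith)
  · exact mul_pos (mul_pos_of_neg_of_neg (by linarith) (by linarith)) (by linarith)
  · exact mul_neg_of_pos_of_neg (mul_pos_of_neg_of_neg (by linarith) (by linarith)) (by linarith)

/-- The hump-dip-hump shape `HDH` is strongly attainable in the scale-separated
case `2λ₁ < λ₂`: there are coefficients `u₂, u₁ > 0`, `w₁, w₂ < 0` such that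
`l(x) = u₂ e^{−2λ₂x} + w₂ e^{−λ₂x} + u₁ e^{−2λ₁x} + w₁ e^{−λ₁x}` has sign
pattern `(+, −, +, −)` with zeros exactly at the prescribed `r₁ < r₂ < r₃`. -/
theorem HDH_strongly_attainable (lam1 lam2 r1 r2 r3 : ℝ)
    (h1 : 0 < lam1) (h2 : 2 * lam1 < lam2)
    (hr1 : 0 < r1) (hr12 : r1 < r2) (hr23 : r2 < r3) :
    ∃ u2 u1 w1 w2 : ℝ, 0 < u2 ∧ 0 < u1 ∧ w1 < 0 ∧ w2 < 0 ∧
      ∃ l : ℝ → ℝ,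
        (∀ x : ℝ, l x = u2 * Real.exp (-(2 * lam2 * x)) +
          w2 * Real.exp (-(lam2 * x)) + u1 * Real.exp (-(2 * lam1 * x)) +
          w1 * Real.exp (-(lam1 * x))) ∧
        (∀ x : ℝ, 0 ≤ x → x < r1 → 0 < l x) ∧
        (∀ x : ℝ, r1 < x → x < r2 → l x < 0) ∧
        (∀ x : ℝ, r2 < x → x < r3 → 0 < l x) ∧
        (∀ x : ℝ, r3 < x → l x < 0) ∧
        l r1 = 0 ∧ l r2 = 0 ∧ l r3 = 0 := by
  obtain ⟨u2, u1, w1, w2, hu2, hu1, hw1, hw2, l, hl, hpos, hrest⟩ :=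
    HDH_strongly_attainable_general (k1 := 2 * lam2) (k2 := lam2) (k3 := 2 * lam1) (k4 := lam1)
      (by linarith) h2 (by linarith) hr12 hr23
  exact ⟨u2, u1, w1, w2, hu2, hu1, hw1, hw2, l, hl, fun x _ => hpos x, hrest⟩
end
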